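/- arXiv:1801.02602 — 3 statements merged into one kernel-verified Lean document; each statement's English description precedes it below -/
import Mathlib

section
/- For a simple d-polytope P and a linear ordering ≺ of its vertices, let h_k^≺ be the number of vertices with exactly k neighbors smaller in ≺, and let F(P) be the total number of nonempty faces of P. Then Σ_{k=0}^{d} 2^k · h_k^≺ ≥ F(P), with equality if and only if ≺ is an abstract objective function (i.e., every nonempty face of P has a unique local maximum vertex with respect to ≺). -/
open Set

variable {d : ℕ}

/-- A polytope: the convex hull of a finite set of points. -/
def IsPolytope (P : Set (EuclideanSpace ℝ (Fin d))) : Prop :=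
  ∃ V : Finset (EuclideanSpace ℝ (Fin d)), P = convexHull ℝ (V : Set (EuclideanSpace ℝ (Fin d)))

/-- Two vertices are adjacent if the segment between them is an exposed face (an edge). -/
def PolyAdj (P : Set (EuclideanSpace ℝ (Fin d))) (u v : EuclideanSpace ℝ (Fin d)) : Prop :=
  u ≠ v ∧ u ∈ Set.extremePoints ℝ P ∧ v ∈ Set.extremePoints ℝ P ∧
    IsExposed ℝ P (segment ℝ u v)

/-- A simple `d`-polytope: full-dimensional and every vertex lies on exactly `d` edges. -/
def IsSimplePolytope (P : Set (EuclideanSpace ℝ (Fin d))) : Prop :=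
  IsPolytope P ∧ Module.finrank ℝ (vectorSpan ℝ P) = d ∧
    ∀ v ∈ Set.extremePoints ℝ P, {u | PolyAdj P u v}.ncard = d

/-- `v` is a local maximum of the ordering `φ` in the face `F`:
`v` is a vertex of `F` larger than all its neighbors inside `F`. -/
def PolyLocalMax (P F : Set (EuclideanSpace ℝ (Fin d))) (φ : EuclideanSpace ℝ (Fin d) → ℕ)
    (v : EuclideanSpace ℝ (Fin d)) : Prop :=
  v ∈ Set.extremePoints ℝ P ∧ v ∈ F ∧ ∀ u ∈ F, PolyAdj P u v → φ u < φ v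

/-- An abstract objective function: every nonempty (exposed) face has a
unique local maximum vertex. -/
def IsAOF (P : Set (EuclideanSpace ℝ (Fin d))) (φ : EuclideanSpace ℝ (Fin d) → ℕ) : Prop :=
  ∀ F : Set (EuclideanSpace ℝ (Fin d)), IsExposed ℝ P F → F.Nonempty →
    ∃! v, PolyLocalMax P F φ v


lemma aux_hull (V : Set (EuclideanSpace ℝ (Fin d))) (hV : V.Finite) :
    convexHull ℝ (extremePoints ℝ (convexHull ℝ V)) = convexHull ℝ V := by
  have hfin : (extremePoints ℝ (convexHull ℝ V)).Finite := hV.subset extremePoints_convexHull_subset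
  have h := closure_convexHull_extremePoints (hV.isCompact_convexHull (𝕜 := ℝ)) (convex_convexHull ℝ V)
  rwa [(hfin.isClosed_convexHull ℝ).closure_eq] at h

lemma aux_sep (S : Set (EuclideanSpace ℝ (Fin d))) (hS : S.Finite) (q : EuclideanSpace ℝ (Fin d))
    (hq : q ∈ extremePoints ℝ (convexHull ℝ S)) :
    ∃ l : EuclideanSpace ℝ (Fin d) →L[ℝ] ℝ, ∀ s ∈ S, s ≠ q → l s < l q := by
  have hc := ((convex_convexHull ℝ S).mem_extremePoints_iff_convex_sdiff.1 hq).2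
  have hsub : convexHull ℝ (S \ {q}) ⊆ convexHull ℝ S \ {q} :=
    convexHull_min (fun x hx => ⟨subset_convexHull ℝ S hx.1, hx.2⟩) hc
  have hn : q ∉ convexHull ℝ (S \ {q}) := fun h => (hsub h).2 rfl
  obtain ⟨f, u, h1, h2⟩ := geometric_hahn_banach_closed_point (convex_convexHull ℝ (S \ {q}))
    ((hS.subset diff_subset).isClosed_convexHull ℝ) hn
  exact ⟨f, fun s hs hsq => (h1 s (subset_convexHull ℝ _ ⟨hs, hsq⟩)).trans h2⟩

lemma aux_le (W : Set (EuclideanSpace ℝ (Fin d))) (l : EuclideanSpace ℝ (Fin d) →L[ℝ] ℝ) (c : ℝ)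
    (h : ∀ w ∈ W, l w ≤ c) : ∀ x ∈ convexHull ℝ W, l x ≤ c := by
  have : convexHull ℝ W ⊆ {x | l x ≤ c} :=
    convexHull_min h (convex_halfSpace_le l.toLinearMap.isLinear c)
  exact this

/-- the edge produced by a functional -/
lemma aux_edge (P : Set (EuclideanSpace ℝ (Fin d))) (hPc : IsCompact P) (hPv : Convex ℝ P)
    (hW : convexHull ℝ (extremePoints ℝ P) = P) (l : EuclideanSpace ℝ (Fin d) →L[ℝ] ℝ)
    (v w : EuclideanSpace ℝ (Fin d)) (hv : v ∈ extremePoints ℝ P) (hw : w ∈ extremePoints ℝ P)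
    (hlw : l w = l v) (hl : ∀ x ∈ extremePoints ℝ P, x ≠ v → x ≠ w → l x < l v) :
    IsExposed ℝ P (segment ℝ w v) := by
  have hle : ∀ x ∈ P, l x ≤ l v := by
    rw [← hW]
    apply aux_le
    intro x hx
    by_cases h1 : x = v
    · rw [h1]
    by_cases h2 : x = w
    · rw [h2, hlw]
    exact (hl x hx h1 h2).le
  set F : Set (EuclideanSpace ℝ (Fin d)) := {x ∈ P | ∀ y ∈ P, l y ≤ l x} with hF
  have hFe : IsExposed ℝ P F := fun _ => ⟨l, rfl⟩
  have hvF : v ∈ F := ⟨hv.1, hle⟩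
  have hwF : w ∈ F := ⟨hw.1, fun y hy => hlw ▸ hle y hy⟩
  have hFc : Convex ℝ F := hFe.convex hPv
  have hext : extremePoints ℝ F ⊆ {w, v} := by
    intro x hx
    have hx2 : x ∈ extremePoints ℝ P := hFe.isExtreme.extremePoints_subset_extremePoints hx
    by_contra hne
    simp only [mem_insert_iff, mem_singleton_iff, not_or] at hne
    have := hl x hx2 hne.2 hne.1
    have := hx.1.2 v hv.1
    linarith
  have hFK : IsCompact F := hFe.isCompact hPc
  have h := closure_convexHull_extremePoints hFK hFc
  have hfin : (extremePoints ℝ F).Finite := (Set.toFinite {w, v}).subset hext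
  rw [(hfin.isClosed_convexHull ℝ).closure_eq] at h
  have : F = segment ℝ w v := by
    apply Subset.antisymm
    · rw [← h, ← convexHull_pair]
      exact convexHull_mono hext
    · exact hFc.segment_subset hwF hvF
  rwa [← this]

lemma aux_ext (P : Set (EuclideanSpace ℝ (Fin d))) (v w z : EuclideanSpace ℝ (Fin d))
    (hv : v ∈ P) (hz : z ∈ P) (hw : w ∈ extremePoints ℝ P) (hne : w ≠ v)
    (t : ℝ) (h0 : 0 < t) (h1 : t < 1) (h : w - v = t • (z - v)) : False := by
  refine hne (hw.2 hv hz ⟨1 - t, t, by linarith, h0, by ring, ?_⟩).symm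
  rw [eq_add_of_sub_eq h]
  module

lemma aux_ray (P : Set (EuclideanSpace ℝ (Fin d))) (v w z : EuclideanSpace ℝ (Fin d))
    (hv : v ∈ P) (hz : z ∈ extremePoints ℝ P) (hw : w ∈ extremePoints ℝ P) (hne : w ≠ v)
    (hne' : z ≠ v)
    (a b : ℝ) (ha : 0 < a) (hb : 0 < b) (h : a⁻¹ • (w - v) = b⁻¹ • (z - v)) : w = z := by
  have h1 : w - v = (a / b) • (z - v) := by
    rw [div_eq_mul_inv, mul_smul, ← h, smul_inv_smul₀ ha.ne']
  have h2 : z - v = (b / a) • (w - v) := by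
    rw [div_eq_mul_inv, mul_smul, h, smul_inv_smul₀ hb.ne']
  rcases lt_trichotomy a b with hab | hab | hab
  · exact (aux_ext P v w z hv hz.1 hw hne (a / b) (by positivity) ((div_lt_one hb).2 hab) h1).elim
  · rw [hab, div_self hb.ne', one_smul] at h1
    exact sub_left_injective h1
  · exact (aux_ext P v z w hv hw.1 hz hne' (b / a) (by positivity) ((div_lt_one ha).2 hab) h2).elim

lemma aux_cone (P : Set (EuclideanSpace ℝ (Fin d))) (hP : IsPolytope P)
    (v : EuclideanSpace ℝ (Fin d)) (hv : v ∈ extremePoints ℝ P)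
    (N : Finset (EuclideanSpace ℝ (Fin d))) (hN : ∀ u, u ∈ N ↔ PolyAdj P u v) :
    ∀ x ∈ P, ∃ c : EuclideanSpace ℝ (Fin d) → ℝ, (∀ u, 0 ≤ c u) ∧
      x - v = ∑ u ∈ N, c u • (u - v) := by
  obtain ⟨V, rfl⟩ := hP
  set P := convexHull ℝ (V : Set (EuclideanSpace ℝ (Fin d))) with hPdef
  have hhull : convexHull ℝ (extremePoints ℝ P) = P := aux_hull _ V.finite_toSet
  have hWfin : (extremePoints ℝ P).Finite := V.finite_toSet.subset extremePoints_convexHull_subset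
  have hPc : IsCompact P := V.finite_toSet.isCompact_convexHull (𝕜 := ℝ)
  have hPv : Convex ℝ P := convex_convexHull ℝ _
  obtain ⟨l, hl⟩ := aux_sep (extremePoints ℝ P) hWfin v (by rw [hhull]; exact hv)
  let a : EuclideanSpace ℝ (Fin d) → ℝ := fun w => l v - l w
  have ha : ∀ w ∈ extremePoints ℝ P, w ≠ v → 0 < a w := fun w hw hne => sub_pos.2 (hl w hw hne)
  let q : EuclideanSpace ℝ (Fin d) → EuclideanSpace ℝ (Fin d) := fun w => (a w)⁻¹ • (w - v)
  set Q : Set (EuclideanSpace ℝ (Fin d)) := q '' (extremePoints ℝ P \ {v}) with hQ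
  have hQfin : Q.Finite := (hWfin.subset diff_subset).image _
  let K : Set (EuclideanSpace ℝ (Fin d)) := {y | ∃ c : EuclideanSpace ℝ (Fin d) → ℝ,
    (∀ u, 0 ≤ c u) ∧ y = ∑ u ∈ N, c u • (u - v)}
  have hKs : ∀ t : ℝ, 0 ≤ t → ∀ y ∈ K, t • y ∈ K := by
    rintro t ht y ⟨c, hc, rfl⟩
    refine ⟨fun u => t * c u, fun u => mul_nonneg ht (hc u), ?_⟩
    simp only [Finset.smul_sum, mul_smul]
  have hKa : ∀ y ∈ K, ∀ z ∈ K, y + z ∈ K := by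
    rintro y ⟨c, hc, rfl⟩ z ⟨e, he, rfl⟩
    refine ⟨fun u => c u + e u, fun u => add_nonneg (hc u) (he u), ?_⟩
    simp only [← Finset.sum_add_distrib, add_smul]
  have hKc : Convex ℝ K := by
    intro y hy z hz s t hs ht _
    exact hKa _ (hKs s hs y hy) _ (hKs t ht z hz)
  have hKN : ∀ u ∈ N, u - v ∈ K := by
    classical
    intro u hu
    refine ⟨fun x => if x = u then 1 else 0, fun x => by positivity, ?_⟩
    simp [hu]
  have hext : extremePoints ℝ (convexHull ℝ Q) ⊆ K := by
    intro p hp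
    obtain ⟨w, ⟨hw, hwv⟩, rfl⟩ := extremePoints_convexHull_subset hp
    have hwv : w ≠ v := hwv
    obtain ⟨m, hm⟩ := aux_sep Q hQfin _ hp
    have key : ∀ x ∈ extremePoints ℝ P, x ≠ v →
        (m + m (q w) • l) x - (m + m (q w) • l) v = a x * (m (q x) - m (q w)) := by
      intro x hx hxv
      have h1 : x - v = a x • q x := by
        simp only [q]; rw [smul_inv_smul₀ (ha x hx hxv).ne']
      have h2 : m x - m v = a x * m (q x) := by
        rw [← map_sub, h1, map_smul, smul_eq_mul]
      have h3 : l x - l v = - a x := by simp [a]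
      have : (m + m (q w) • l) x - (m + m (q w) • l) v
        = (m x - m v) + m (q w) * (l x - l v) := by simp; ring
      rw [this, h2, h3]; ring
    have hadj : PolyAdj P w v := by
      refine ⟨hwv, hw, hv, aux_edge P hPc hPv hhull (m + m (q w) • l) v w hv hw ?_ ?_⟩
      · have := key w hw hwv
        rw [sub_self, mul_zero] at this
        linarith
      · intro x hx hxv hxw
        have h1 := key x hx hxv
        have h2 : q x ≠ q w := fun h =>
          hxw (aux_ray P v x w hv.1 hw hx hxv hwv _ _ (ha x hx hxv) (ha w hw hwv) h)
        have h3 := hm (q x) ⟨x, ⟨hx, hxv⟩, rfl⟩ h2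
        have := mul_neg_of_pos_of_neg (ha x hx hxv) (sub_neg.2 h3)
        linarith
    exact hKs _ (inv_nonneg.2 (ha w hw hwv).le) _ (hKN w ((hN w).2 hadj))
  have hQK : convexHull ℝ Q ⊆ K := by
    rw [← aux_hull Q hQfin]
    exact convexHull_min hext hKc
  have hWK : ∀ w ∈ extremePoints ℝ P, w - v ∈ K := by
    intro w hw
    by_cases hwv : w = v
    · rw [hwv, sub_self]
      exact ⟨0, fun _ => le_rfl, by simp⟩
    · have h1 : w - v = a w • q w := by
        simp only [q]; rw [smul_inv_smul₀ (ha w hw hwv).ne']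
      rw [h1]
      exact hKs _ (ha w hw hwv).le _ (hQK (subset_convexHull ℝ _ ⟨w, ⟨hw, hwv⟩, rfl⟩))
  have hfinal : convexHull ℝ (extremePoints ℝ P) ⊆ {x | x - v ∈ K} := by
    refine convexHull_min hWK ?_
    intro y hy z hz s t hs ht hst
    have := hKc hy hz hs ht hst
    have e : s • y + t • z - v = s • (y - v) + t • (z - v) := by
      rw [eq_sub_of_add_eq hst]; module
    show s • y + t • z - v ∈ K
    rw [e]; exact this
  rw [hhull] at hfinal
  exact fun x hx => hfinal hx

lemma aux_inj (P : Set (EuclideanSpace ℝ (Fin d))) (v : EuclideanSpace ℝ (Fin d))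
    (N : Finset (EuclideanSpace ℝ (Fin d))) (hNP : ∀ u ∈ N, u ∈ P)
    (hcone : ∀ x ∈ P, ∃ c : EuclideanSpace ℝ (Fin d) → ℝ, (∀ u, 0 ≤ c u) ∧
      x - v = ∑ u ∈ N, c u • (u - v))
    (F G : Set (EuclideanSpace ℝ (Fin d))) (hF : IsExposed ℝ P F) (hG : IsExposed ℝ P G)
    (hvF : v ∈ F) (hvG : v ∈ G) (hFG : ∀ u ∈ N, u ∈ F → u ∈ G) : F ⊆ G := by
  obtain ⟨f, hf⟩ := hF ⟨v, hvF⟩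
  obtain ⟨g, hg⟩ := hG ⟨v, hvG⟩
  rw [hf] at hvF
  rw [hg] at hvG
  intro x hx
  rw [hf] at hx
  obtain ⟨c, hc, hxc⟩ := hcone x hx.1
  have h1 : ∑ u ∈ N, c u * (f v - f u) = 0 := by
    have h := congrArg f hxc
    simp only [map_sub, map_sum, map_smul, smul_eq_mul] at h
    have h2 : f x = f v := le_antisymm (hvF.2 x hx.1) (hx.2 v hvF.1)
    rw [h2, sub_self] at h
    rw [← neg_eq_zero, ← Finset.sum_neg_distrib, h]
    exact Finset.sum_congr rfl fun u _ => by ring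
  have h2 := (Finset.sum_eq_zero_iff_of_nonneg (fun u hu =>
    mul_nonneg (hc u) (sub_nonneg.2 (hvF.2 u (hNP u hu))))).1 h1
  have h3 : g x - g v = 0 := by
    have h := congrArg g hxc
    simp only [map_sub, map_sum, map_smul, smul_eq_mul] at h
    rw [h]
    apply Finset.sum_eq_zero
    intro u hu
    rcases mul_eq_zero.1 (h2 u hu) with h0 | h0
    · rw [h0, zero_mul]
    · have huF : u ∈ F := by
        rw [hf]
        refine ⟨hNP u hu, fun y hy => ?_⟩
        have := hvF.2 y hy
        linarith
      have huG := hFG u hu huF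
      rw [hg] at huG
      have e1 := huG.2 v hvG.1
      have e2 := hvG.2 u huG.1
      rw [le_antisymm e2 e1, sub_self, mul_zero]
  rw [hg]
  refine ⟨hx.1, fun y hy => ?_⟩
  have := hvG.2 y hy
  linarith

lemma aux_surj (P : Set (EuclideanSpace ℝ (Fin d))) (v : EuclideanSpace ℝ (Fin d)) (hvP : v ∈ P)
    (hdim : Module.finrank ℝ (vectorSpan ℝ P) = d)
    (N : Finset (EuclideanSpace ℝ (Fin d))) (hNP : ∀ u ∈ N, u ∈ P) (hcard : N.card = d)
    (hcone : ∀ x ∈ P, ∃ c : EuclideanSpace ℝ (Fin d) → ℝ, (∀ u, 0 ≤ c u) ∧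
      x - v = ∑ u ∈ N, c u • (u - v))
    (S : Finset (EuclideanSpace ℝ (Fin d))) :
    ∃ F, IsExposed ℝ P F ∧ v ∈ F ∧ ∀ u ∈ N, u ∈ F ↔ u ∈ S := by
  classical
  have htop : vectorSpan ℝ P = ⊤ := by
    apply Submodule.eq_top_of_finrank_eq
    rw [hdim, finrank_euclideanSpace_fin]
  have hspan : ⊤ ≤ Submodule.span ℝ (Set.range (fun u : N => (u : EuclideanSpace ℝ (Fin d)) - v)) := by
    rw [← htop, vectorSpan_eq_span_vsub_set_right ℝ hvP, Submodule.span_le]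
    rintro _ ⟨x, hx, rfl⟩
    obtain ⟨c, -, hxc⟩ := hcone x hx
    show x - v ∈ _
    rw [hxc]
    exact Submodule.sum_mem _ fun u hu => Submodule.smul_mem _ _ (Submodule.subset_span ⟨⟨u, hu⟩, rfl⟩)
  let b := basisOfTopLeSpanOfCardEqFinrank _ hspan (by simp [hcard])
  let f₀ : EuclideanSpace ℝ (Fin d) →ₗ[ℝ] ℝ :=
    b.constr ℝ (fun u : N => if (u : EuclideanSpace ℝ (Fin d)) ∈ S then (0 : ℝ) else -1)
  let f : EuclideanSpace ℝ (Fin d) →L[ℝ] ℝ := LinearMap.toContinuousLinearMap f₀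
  have hf : ∀ u ∈ N, f u - f v = if u ∈ S then (0 : ℝ) else -1 := by
    intro u hu
    have h1 : f (b ⟨u, hu⟩) = if u ∈ S then (0 : ℝ) else -1 := by
      show f₀ (b ⟨u, hu⟩) = _
      simp only [f₀]
      rw [Module.Basis.constr_basis]
    rw [← map_sub, ← h1]
    congr 1
    simp [b]
  have hle : ∀ x ∈ P, f x ≤ f v := by
    intro x hx
    obtain ⟨c, hc, hxc⟩ := hcone x hx
    have h := congrArg f hxc
    simp only [map_sub, map_sum, map_smul, smul_eq_mul] at h
    have : ∑ u ∈ N, c u * (f u - f v) ≤ 0 := by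
      apply Finset.sum_nonpos
      intro u hu
      rw [hf u hu]
      apply mul_nonpos_of_nonneg_of_nonpos (hc u)
      split_ifs <;> norm_num
    linarith
  refine ⟨{x ∈ P | ∀ y ∈ P, f y ≤ f x}, fun _ => ⟨f, rfl⟩, ⟨hvP, hle⟩, fun u hu => ?_⟩
  have h := hf u hu
  constructor
  · intro hF
    by_contra hS
    rw [if_neg hS] at h
    have := hF.2 v hvP
    linarith
  · intro hS
    rw [if_pos hS] at h
    exact ⟨hNP u hu, fun y hy => by have := hle y hy; linarith⟩

lemma aux_exists_max (P : Set (EuclideanSpace ℝ (Fin d))) (hPc : IsCompact P)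
    (hfin : (extremePoints ℝ P).Finite)
    (φ : EuclideanSpace ℝ (Fin d) → ℕ) (hφ : Set.InjOn φ (Set.extremePoints ℝ P))
    (F : Set (EuclideanSpace ℝ (Fin d))) (hF : IsExposed ℝ P F) (hne : F.Nonempty) :
    ∃ v, PolyLocalMax P F φ v := by
  have hFK : IsCompact F := hF.isCompact hPc
  obtain ⟨x, hx⟩ := hFK.extremePoints_nonempty hne
  have hx2 := hF.isExtreme.extremePoints_subset_extremePoints hx
  obtain ⟨v, hv, hmax⟩ := Set.exists_max_image (extremePoints ℝ P ∩ F) φ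
    (hfin.subset inter_subset_left) ⟨x, hx2, hx.1⟩
  refine ⟨v, hv.1, hv.2, fun u hu huv => ?_⟩
  exact lt_of_le_of_ne (hmax u ⟨huv.2.1, hu⟩) fun h => huv.1 (hφ huv.2.1 hv.1 h)

/-- Kalai's counting identity: `Σ 2^k h_k^≺ ≥ F(P)` with equality iff `≺` is an AOF. -/
theorem stmt_4 (P : Set (EuclideanSpace ℝ (Fin d))) (hP : IsSimplePolytope P)
    (φ : EuclideanSpace ℝ (Fin d) → ℕ) (hφ : Set.InjOn φ (Set.extremePoints ℝ P)) :
    ({F : Set (EuclideanSpace ℝ (Fin d)) | IsExposed ℝ P F ∧ F.Nonempty}.ncard ≤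
        ∑ k ∈ Finset.range (d + 1),
          2 ^ k * {v ∈ Set.extremePoints ℝ P |
            {u | PolyAdj P u v ∧ φ u < φ v}.ncard = k}.ncard) ∧
    (({F : Set (EuclideanSpace ℝ (Fin d)) | IsExposed ℝ P F ∧ F.Nonempty}.ncard =
        ∑ k ∈ Finset.range (d + 1),
          2 ^ k * {v ∈ Set.extremePoints ℝ P |
            {u | PolyAdj P u v ∧ φ u < φ v}.ncard = k}.ncard) ↔ IsAOF P φ) := by
  classical
  obtain ⟨hpoly, hdim, hdeg⟩ := hP
  have hfin : (extremePoints ℝ P).Finite := by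
    obtain ⟨V, rfl⟩ := hpoly
    exact V.finite_toSet.subset extremePoints_convexHull_subset
  have hPc : IsCompact P := by
    obtain ⟨V, rfl⟩ := hpoly
    exact V.finite_toSet.isCompact_convexHull (𝕜 := ℝ)
  have hNfin : ∀ v, {u | PolyAdj P u v}.Finite := fun v => hfin.subset fun u hu => hu.2.1
  have hLfin : ∀ v, {u | PolyAdj P u v ∧ φ u < φ v}.Finite :=
    fun v => (hNfin v).subset fun u hu => hu.1
  let N : EuclideanSpace ℝ (Fin d) → Finset (EuclideanSpace ℝ (Fin d)) :=
    fun v => (hNfin v).toFinset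
  have hN : ∀ v u, u ∈ N v ↔ PolyAdj P u v := fun v u => by simp [N]
  let L : EuclideanSpace ℝ (Fin d) → Finset (EuclideanSpace ℝ (Fin d)) :=
    fun v => (hLfin v).toFinset
  have hL : ∀ v u, u ∈ L v ↔ PolyAdj P u v ∧ φ u < φ v := fun v u => by simp [L]
  have hLc : ∀ v, {u | PolyAdj P u v ∧ φ u < φ v}.ncard = (L v).card :=
    fun v => Set.ncard_eq_toFinset_card _ (hLfin v)
  have hNc : ∀ v ∈ extremePoints ℝ P, (N v).card = d := fun v hv => by
    exact (Set.ncard_eq_toFinset_card _ (hNfin v)).symm.trans (hdeg v hv)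
  have hLN : ∀ v, L v ⊆ N v := fun v u hu => (hN v u).2 ((hL v u).1 hu).1
  have hNP : ∀ v, ∀ u ∈ N v, u ∈ P := fun v u hu => ((hN v u).1 hu).2.1.1
  have hcone := fun v hv => aux_cone P hpoly v hv (N v) (hN v)
  have hsurj : ∀ (v : EuclideanSpace ℝ (Fin d)) (S : Finset (EuclideanSpace ℝ (Fin d))),
      ∃ F : Set (EuclideanSpace ℝ (Fin d)), v ∈ extremePoints ℝ P →
        IsExposed ℝ P F ∧ v ∈ F ∧ ∀ u ∈ N v, u ∈ F ↔ u ∈ S := by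
    intro v S
    by_cases hv : v ∈ extremePoints ℝ P
    · obtain ⟨F, h⟩ := aux_surj P v hv.1 hdim (N v) (hNP v) (hNc v hv) (hcone v hv) S
      exact ⟨F, fun _ => h⟩
    · exact ⟨∅, fun h => (hv h).elim⟩
  choose g hg using hsurj
  let W := hfin.toFinset
  have hW : ∀ v, v ∈ W ↔ v ∈ extremePoints ℝ P := fun v => by simp [W]
  let T : Finset (Σ _ : EuclideanSpace ℝ (Fin d), Finset (EuclideanSpace ℝ (Fin d))) :=
    W.sigma fun v => (L v).powerset
  have hT : ∀ p, p ∈ T ↔ p.1 ∈ extremePoints ℝ P ∧ p.2 ⊆ L p.1 := fun p => by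
    simp [T, Finset.mem_sigma, hW]
  let G : (Σ _ : EuclideanSpace ℝ (Fin d), Finset (EuclideanSpace ℝ (Fin d))) →
    Set (EuclideanSpace ℝ (Fin d)) := fun p => g p.1 p.2
  -- a local maximum of a face gives a preimage
  have hpre : ∀ F, IsExposed ℝ P F → ∀ v, PolyLocalMax P F φ v →
      (⟨v, (N v).filter (· ∈ F)⟩ : Σ _ : EuclideanSpace ℝ (Fin d), Finset _) ∈ T ∧
        G ⟨v, (N v).filter (· ∈ F)⟩ = F := by
    intro F hF v hv
    refine ⟨(hT _).2 ⟨hv.1, fun u hu => ?_⟩, ?_⟩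
    · rw [Finset.mem_filter] at hu
      exact (hL v u).2 ⟨(hN v u).1 hu.1, hv.2.2 u hu.2 ((hN v u).1 hu.1)⟩
    · obtain ⟨h1, h2, h3⟩ := hg v ((N v).filter (· ∈ F)) hv.1
      apply Subset.antisymm
      · refine aux_inj P v (N v) (hNP v) (hcone v hv.1) _ _ h1 hF h2 hv.2.1 fun u hu h => ?_
        exact (Finset.mem_filter.1 ((h3 u hu).1 h)).2
      · refine aux_inj P v (N v) (hNP v) (hcone v hv.1) _ _ hF h1 hv.2.1 h2 fun u hu h => ?_
        exact (h3 u hu).2 (Finset.mem_filter.2 ⟨hu, h⟩)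
  have hmax : ∀ p ∈ T, PolyLocalMax P (G p) φ p.1 := by
    intro p hp
    obtain ⟨h0, hS⟩ := (hT p).1 hp
    obtain ⟨h1, h2, h3⟩ := hg p.1 p.2 h0
    refine ⟨h0, h2, fun u hu huv => ?_⟩
    exact ((hL _ _).1 (hS ((h3 u ((hN _ _).2 huv)).1 hu))).2
  have hface : {F : Set (EuclideanSpace ℝ (Fin d)) | IsExposed ℝ P F ∧ F.Nonempty} =
      ((T.image G : Finset _) : Set (Set (EuclideanSpace ℝ (Fin d)))) := by
    ext F
    simp only [mem_setOf_eq, Finset.coe_image, Set.mem_image, Finset.mem_coe]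
    constructor
    · rintro ⟨hF, hne⟩
      obtain ⟨v, hv⟩ := aux_exists_max P hPc hfin φ hφ F hF hne
      exact ⟨_, hpre F hF v hv⟩
    · rintro ⟨p, hp, rfl⟩
      obtain ⟨h1, h2, -⟩ := hg p.1 p.2 ((hT p).1 hp).1
      exact ⟨h1, _, h2⟩
  have hsum : ∑ k ∈ Finset.range (d + 1),
          2 ^ k * {v ∈ Set.extremePoints ℝ P |
            {u | PolyAdj P u v ∧ φ u < φ v}.ncard = k}.ncard = T.card := by
    have h1 : T.card = ∑ v ∈ W, 2 ^ (L v).card := by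
      simp only [T, Finset.card_sigma, Finset.card_powerset]
    rw [h1, ← Finset.sum_fiberwise_of_maps_to (s := W) (t := Finset.range (d + 1))
      (g := fun v => (L v).card)]
    · apply Finset.sum_congr rfl
      intro k _
      have h2 : {v ∈ Set.extremePoints ℝ P |
            {u | PolyAdj P u v ∧ φ u < φ v}.ncard = k} =
            ((W.filter fun v => (L v).card = k : Finset _) : Set (EuclideanSpace ℝ (Fin d))) := by
        ext v
        simp [hLc, hW]
      rw [h2, Set.ncard_coe_finset, Finset.sum_congr rfl
        (g := fun _ => 2 ^ k) (fun v hv => by rw [(Finset.mem_filter.1 hv).2])]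
      rw [Finset.sum_const, smul_eq_mul, mul_comm]
    · intro v hv
      have := Finset.card_le_card (hLN v)
      rw [hNc v ((hW v).1 hv)] at this
      exact Finset.mem_range.2 (by omega)
  rw [hsum, hface, Set.ncard_coe_finset]
  refine ⟨Finset.card_image_le, ?_⟩
  rw [Finset.card_image_iff]
  constructor
  · intro hinj F hF hne
    obtain ⟨v, hv⟩ := aux_exists_max P hPc hfin φ hφ F hF hne
    refine ⟨v, hv, fun w hw => ?_⟩
    have h1 := hpre F hF v hv
    have h2 := hpre F hF w hw
    exact congrArg Sigma.fst (hinj h2.1 h1.1 (h2.2.trans h1.2.symm))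
  · rintro hA ⟨v, S⟩ hp ⟨w, R⟩ hq hpq
    have m1 := hmax _ hp
    have m2 := hmax _ hq
    have e1 := (hT _).1 hp
    have e2 := (hT _).1 hq
    obtain ⟨a1, a2, a3⟩ := hg v S e1.1
    obtain ⟨b1, b2, b3⟩ := hg w R e2.1
    rw [← hpq] at m2
    have hvw : v = w := (hA (G ⟨v, S⟩) a1 ⟨v, a2⟩).unique m1 m2
    subst hvw
    have hgg : g v S = g v R := hpq
    have : S = R := by
      ext u
      constructor
      · intro hu
        have hn := hLN v (e1.2 hu)
        exact (b3 u hn).1 (hgg ▸ (a3 u hn).2 hu)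
      · intro hu
        have hn := hLN v (e2.2 hu)
        exact (a3 u hn).1 (hgg ▸ (b3 u hn).2 hu)
    rw [this]
end

section
/- For the majority function on n voters with independent uniform ±1 votes, and noise consisting of independently flipping each vote with probability t ∈ (0,1/2), the probability N_t(maj_n) that the noisy majority outcome differs from the true outcome converges, as n → ∞, to arccos(1-2t)/π. -/
open Finset Real

/-- The sign of the majority vote: `1` if more `true` votes than `false`, else `-1`. -/
noncomputable def majSign {n : ℕ} (x : Fin n → Bool) : ℝ :=
  if 0 < ∑ i, (if x i then (1 : ℝ) else -1) then 1 else -1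

/-- The probability that the noisy majority outcome differs from the true one:
each vote is uniform and each is flipped independently with probability `t`. -/
noncomputable def majNoiseSens (n : ℕ) (t : ℝ) : ℝ :=
  ∑ x : Fin n → Bool, ∑ e : Fin n → Bool,
    (1 / 2 ^ n : ℝ) * (∏ i, if e i then t else 1 - t) *
      (if majSign x = majSign (fun i => xor (x i) (e i)) then 0 else 1)

open MeasureTheory Filter

noncomputable def shepK (m : ℕ) (q : ℝ) : ℝ := ∫ a in (0:ℝ)..π, (1 - q * sin a ^ 2) ^ m

lemma shep_swap (F : ℝ → ℝ → ℝ) (hF : Continuous (Function.uncurry F)) (a b c d : ℝ) :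
    ∫ x in a..b, ∫ y in c..d, F x y = ∫ y in c..d, ∫ x in a..b, F x y := by
  apply intervalIntegral_intervalIntegral_swap
  refine (hF.continuousOn.integrableOn_compact
    (isCompact_uIcc.prod isCompact_uIcc (s := Set.uIcc a b) (t := Set.uIcc c d))).mono_set ?_
  exact Set.prod_mono Set.uIoc_subset_uIcc Set.uIoc_subset_uIcc

lemma shep_inner (A B : ℝ) (m : ℕ) :
    ∫ b in (0:ℝ)..π, (A * cos b + B * sin b) ^ (2 * m) = (A ^ 2 + B ^ 2) ^ m * shepK m 1 := by
  obtain ⟨R, φ, hA, hB⟩ : ∃ R φ : ℝ, A = R * cos φ ∧ B = R * sin φ :=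
    ⟨‖(⟨A, B⟩ : ℂ)‖, Complex.arg ⟨A, B⟩, by simp, by simp⟩
  have h1 : ∀ b, (A * cos b + B * sin b) ^ (2 * m) = (A ^ 2 + B ^ 2) ^ m * (cos (b - φ) ^ 2) ^ m := by
    intro b
    rw [← mul_pow, pow_mul]
    congr 1
    have : A ^ 2 + B ^ 2 = R ^ 2 := by
      rw [hA, hB]; linear_combination R ^ 2 * sin_sq_add_cos_sq φ
    rw [this, cos_sub, hA, hB]; ring
  simp_rw [h1]
  rw [intervalIntegral.integral_const_mul, shepK]
  congr 1
  rw [intervalIntegral.integral_comp_sub_right (fun x => (cos x ^ 2) ^ m)]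
  have hp : Function.Periodic (fun x : ℝ => (cos x ^ 2) ^ m) π := by
    intro x; simp [cos_add_pi]
  have := hp.intervalIntegral_add_eq (0 - φ) 0
  rw [show π - φ = 0 - φ + π by ring, this, zero_add]
  congr 1; ext x; rw [one_mul, cos_sq']

lemma shep_ptwise (q s : ℝ) :
    Tendsto (fun m : ℕ => (1 - q * sin (s / √m) ^ 2) ^ m) atTop (nhds (exp (-q * s ^ 2))) := by
  simp_rw [sub_eq_add_neg]
  apply Real.tendsto_one_add_pow_exp_of_tendsto
  have hs : Tendsto (fun m : ℕ => s / √(m:ℝ)) atTop (nhds 0) :=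
    tendsto_const_nhds.div_atTop (tendsto_sqrt_atTop.comp tendsto_natCast_atTop_atTop)
  have h2 : Tendsto (fun m : ℕ => -q * (s * sinc (s / √(m:ℝ))) ^ 2) atTop
      (nhds (-q * (s * sinc 0) ^ 2)) :=
    (((continuous_sinc.tendsto 0).comp hs).const_mul s).pow 2 |>.const_mul (-q)
  rw [sinc_zero, mul_one] at h2
  refine h2.congr' ?_
  filter_upwards [eventually_gt_atTop 0] with m hm
  have hm' : (0:ℝ) < m := by exact_mod_cast hm
  have hq : √(m:ℝ) ≠ 0 := (Real.sqrt_pos.2 hm').ne'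
  have key : s * sinc (s / √(m:ℝ)) = √m * sin (s / √m) := by
    by_cases h0 : s = 0
    · simp [h0]
    · rw [sinc_of_ne_zero (div_ne_zero h0 hq)]; field_simp
  rw [key, mul_pow, Real.sq_sqrt hm'.le]; ring

lemma shep_laplace (q : ℝ) (hq : 0 < q) (hq1 : q ≤ 1) :
    Tendsto (fun m : ℕ => √(m:ℝ) * shepK m q) atTop (nhds √(π / q)) := by
  rw [← integral_gaussian]
  let F : ℕ → ℝ → ℝ := fun m => Set.indicator (Set.Ioc (-(π/2) * √(m:ℝ)) (π/2 * √m))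
    (fun s => (1 - q * sin (s / √m) ^ 2) ^ m)
  have hF : Tendsto (fun m => ∫ s, F m s) atTop (nhds (∫ s, exp (-q * s ^ 2))) := by
    refine tendsto_integral_filter_of_dominated_convergence
      (fun s => exp (-(q * (4 / π ^ 2)) * s ^ 2)) ?_ ?_ ?_ ?_
    · refine Eventually.of_forall fun m => ?_
      refine AEStronglyMeasurable.indicator ?_ measurableSet_Ioc
      exact Continuous.aestronglyMeasurable (by fun_prop)
    · filter_upwards [eventually_gt_atTop 0] with m hm
      refine Eventually.of_forall fun s => ?_
      have hm' : (0:ℝ) < m := by exact_mod_cast hm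
      have hsq := Real.sqrt_pos.2 hm'
      simp only [F, Set.indicator]
      split_ifs with h
      · have habs : |s / √(m:ℝ)| ≤ π / 2 := by
          rw [abs_le, le_div_iff₀ hsq, div_le_iff₀ hsq]
          exact ⟨h.1.le, h.2⟩
        have h1 := mul_abs_le_abs_sin habs
        have h2 : 4 / π ^ 2 * (s ^ 2 / m) ≤ sin (s / √m) ^ 2 := by
          have := pow_le_pow_left₀ (by positivity) h1 2
          rw [mul_pow, sq_abs, sq_abs, div_pow, div_pow, Real.sq_sqrt hm'.le] at this
          norm_num at this
          exact this
        have h3 : 0 ≤ 1 - q * sin (s / √m) ^ 2 := by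
          nlinarith [sin_sq_le_one (s / √m), sq_nonneg (sin (s / √m))]
        rw [norm_of_nonneg (pow_nonneg h3 _)]
        have h4 : 1 - q * sin (s / √m) ^ 2 ≤ exp (-(q * (4 / π ^ 2 * (s ^ 2 / m)))) := by
          refine le_trans ?_ (Real.one_sub_le_exp_neg _)
          nlinarith
        refine (pow_le_pow_left₀ h3 h4 m).trans (le_of_eq ?_)
        rw [← Real.exp_nat_mul]
        congr 1
        field_simp
      · simp; positivity
    · exact integrable_exp_neg_mul_sq (by positivity)
    · refine Eventually.of_forall fun s => ?_
      refine (shep_ptwise q s).congr' ?_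
      have : Tendsto (fun m : ℕ => π / 2 * √(m:ℝ)) atTop atTop :=
        (tendsto_sqrt_atTop.comp tendsto_natCast_atTop_atTop).const_mul_atTop (by positivity)
      filter_upwards [this.eventually_gt_atTop |s|] with m hm
      have := abs_lt.1 hm
      simp only [F]
      rw [Set.indicator_of_mem]
      exact ⟨by linarith [this.1], this.2.le⟩
  refine hF.congr' ?_
  filter_upwards [eventually_gt_atTop 0] with m hm
  have hm' : (0:ℝ) < m := by exact_mod_cast hm
  have hsq := Real.sqrt_pos.2 hm'
  simp only [F]
  rw [integral_indicator measurableSet_Ioc, ← intervalIntegral.integral_of_le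
    (by nlinarith [pi_pos]),
    intervalIntegral.integral_comp_div (fun x => (1 - q * sin x ^ 2) ^ m) hsq.ne',
    mul_div_cancel_right₀ _ hsq.ne', mul_div_cancel_right₀ _ hsq.ne', smul_eq_mul, shepK]
  congr 1
  have hp : Function.Periodic (fun x : ℝ => (1 - q * sin x ^ 2) ^ m) π := by
    intro x; simp [sin_add_pi]
  have := hp.intervalIntegral_add_eq (-(π/2)) 0
  rw [zero_add, show -(π/2) + π = π/2 by ring] at this
  exact this

lemma shepK_cont (m : ℕ) : Continuous (fun r : ℝ => shepK m (1 - r ^ 2)) := by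
  unfold shepK
  apply intervalIntegral.continuous_parametric_intervalIntegral_of_continuous'
  simp only [Function.uncurry_def]; fun_prop

lemma shep_outer (ρ : ℝ) (h0 : 0 < ρ) (h1 : ρ < 1) :
    Tendsto (fun m : ℕ => ∫ r in (-ρ)..ρ, √(m:ℝ) * shepK m (1 - r ^ 2)) atTop
      (nhds (√π * (2 * arcsin ρ))) := by
  have hint : ∫ r in (-ρ)..ρ, √(π / (1 - r ^ 2)) = √π * (2 * arcsin ρ) := by
    have hd : ∀ r ∈ Set.uIcc (-ρ) ρ, HasDerivAt (fun r => √π * arcsin r) (√(π / (1 - r ^ 2))) r := by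
      intro r hr
      rw [Set.uIcc_of_le (by linarith)] at hr
      have := (Real.hasDerivAt_arcsin (x := r) (by linarith [hr.1]) (by linarith [hr.2])).const_mul √π
      rw [Real.sqrt_div pi_pos.le, div_eq_mul_one_div]
      exact this
    rw [intervalIntegral.integral_eq_sub_of_hasDerivAt hd, arcsin_neg]
    · ring
    · apply ContinuousOn.intervalIntegrable
      intro r hr
      rw [Set.uIcc_of_le (by linarith)] at hr
      apply ContinuousAt.continuousWithinAt
      have : 1 - r ^ 2 ≠ 0 := by nlinarith [hr.1, hr.2]
      fun_prop (disch := assumption)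
  rw [← hint]
  have hρ : 0 < 1 - ρ ^ 2 := by nlinarith
  obtain ⟨C, hC⟩ := (shep_laplace (1 - ρ ^ 2) hρ (by nlinarith)).bddAbove_range
  refine intervalIntegral.tendsto_integral_filter_of_dominated_convergence (fun _ => C) ?_ ?_ ?_ ?_
  · exact Eventually.of_forall fun m => ((shepK_cont m).const_mul _).aestronglyMeasurable
  · refine Eventually.of_forall fun m => Eventually.of_forall fun r hr => ?_
    rw [Set.uIoc_of_le (by linarith)] at hr
    have hr2 : r ^ 2 ≤ ρ ^ 2 := by nlinarith [hr.1, hr.2]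
    have hnn : ∀ a, 0 ≤ 1 - (1 - r ^ 2) * sin a ^ 2 := fun a => by
      nlinarith [sin_sq_le_one a, sq_nonneg (sin a), mul_nonneg (sq_nonneg r) (sq_nonneg (sin a))]
    have hK0 : 0 ≤ shepK m (1 - r ^ 2) :=
      intervalIntegral.integral_nonneg pi_pos.le fun a _ => pow_nonneg (hnn a) _
    rw [norm_of_nonneg (by positivity)]
    refine le_trans ?_ (hC ⟨m, rfl⟩)
    refine mul_le_mul_of_nonneg_left ?_ (by positivity)
    refine intervalIntegral.integral_mono_on pi_pos.le ?_ ?_ fun a _ => ?_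
    · exact Continuous.intervalIntegrable (by fun_prop) _ _
    · exact Continuous.intervalIntegrable (by fun_prop) _ _
    · refine pow_le_pow_left₀ (hnn a) ?_ _
      nlinarith [sq_nonneg (sin a)]
  · exact intervalIntegrable_const
  · refine Eventually.of_forall fun r hr => ?_
    rw [Set.uIoc_of_le (by linarith)] at hr
    exact shep_laplace _ (by nlinarith [hr.1, hr.2]) (by nlinarith)

lemma shep_limit (ρ : ℝ) (h0 : 0 < ρ) (h1 : ρ < 1) :
    Tendsto (fun m : ℕ => (2 * (m:ℝ) + 1) / (2 * π ^ 2) *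
      (shepK m 1 * ∫ r in (-ρ)..ρ, shepK m (1 - r ^ 2))) atTop
      (nhds (2 / π * arcsin ρ)) := by
  have hA := shep_laplace 1 one_pos le_rfl
  have hB := shep_outer ρ h0 h1
  have hC : Tendsto (fun m : ℕ => (2 + 1 / (m:ℝ)) / (2 * π ^ 2)) atTop
      (nhds ((2 + 0) / (2 * π ^ 2))) :=
    (tendsto_const_nhds.add tendsto_one_div_atTop_nhds_zero_nat).div_const _
  have := hC.mul (hA.mul hB)
  have e : (2 + 0) / (2 * π ^ 2) * (√(π / 1) * (√π * (2 * arcsin ρ))) = 2 / π * arcsin ρ := by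
    rw [div_one]
    have := Real.mul_self_sqrt pi_pos.le
    field_simp
    linear_combination arcsin ρ * 2 * this
  rw [e] at this
  refine this.congr' ?_
  filter_upwards [eventually_gt_atTop 0] with m hm
  have hm' : (0:ℝ) < m := by exact_mod_cast hm
  rw [intervalIntegral.integral_const_mul]
  have := Real.mul_self_sqrt hm'.le
  have e2 : (2 * (m:ℝ) + 1) = (2 + 1 / m) * (√m * √m) := by rw [this]; field_simp
  rw [e2]; ring

def shepSg (b : Bool) : ℤ := if b then 1 else -1

def shepZ {n : ℕ} (x : Fin n → Bool) : ℤ := ∑ i, shepSg (x i)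

lemma shepZ_odd {n : ℕ} (hn : Odd n) (x : Fin n → Bool) : Odd (shepZ x) := by
  have h : shepZ x = 2 * (∑ i, if x i then (1:ℤ) else 0) - n := by
    have : ∀ i, shepSg (x i) = 2 * (if x i then (1:ℤ) else 0) - 1 := by
      intro i; cases h : x i <;> simp [shepSg]
    unfold shepZ
    simp_rw [this]
    rw [Finset.sum_sub_distrib, ← Finset.mul_sum]
    simp
  rw [h]
  obtain ⟨k, hk⟩ := hn
  exact ⟨(∑ i, if x i then (1:ℤ) else 0) - k - 1, by
    have hk' : (n:ℤ) = 2 * k + 1 := by exact_mod_cast hk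
    linear_combination -hk'⟩

lemma shep_majSign {n : ℕ} (x : Fin n → Bool) : majSign x = if 0 < shepZ x then 1 else -1 := by
  have : ∑ i, (if x i then (1 : ℝ) else -1) = ((shepZ x : ℤ) : ℝ) := by
    unfold shepZ shepSg; push_cast; rfl
  rw [majSign, this]; simp

lemma shep_prod (n : ℕ) (φ : Bool → Bool → ℂ) :
    ∑ x : Fin n → Bool, ∑ e : Fin n → Bool, ∏ i, φ (x i) (e i) = (∑ b, ∑ c, φ b c) ^ n := by
  have h1 : ∀ x : Fin n → Bool, ∑ e : Fin n → Bool, ∏ i, φ (x i) (e i) = ∏ i, ∑ c, φ (x i) c := by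
    intro x
    rw [Finset.prod_univ_sum, Fintype.piFinset_univ]
  simp_rw [h1]
  have := Finset.prod_univ_sum (fun _ : Fin n => (Finset.univ : Finset Bool))
    (fun _ b => ∑ c, φ b c)
  rw [Fintype.piFinset_univ] at this
  rw [← this]; simp

noncomputable def shepW (n : ℕ) (t : ℝ) (e : Fin n → Bool) : ℝ :=
  (1 / 2 ^ n : ℝ) * (∏ i, if e i then t else 1 - t)

lemma shep_cos (n : ℕ) (t α β : ℝ) :
    ∑ x : Fin n → Bool, ∑ e : Fin n → Bool, shepW n t e *
      cos (α * shepZ x + β * shepZ (fun i => xor (x i) (e i)))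
      = (cos α * cos β - (1 - 2 * t) * (sin α * sin β)) ^ n := by
  have key := shep_prod n (fun b c => (1 / 2 : ℂ) * (if c then (t:ℂ) else 1 - t) *
    Complex.exp (((α * shepSg b + β * shepSg (xor b c) : ℝ) : ℂ) * Complex.I))
  have hR : (∑ b, ∑ c, (1 / 2 : ℂ) * (if c then (t:ℂ) else 1 - t) *
    Complex.exp (((α * shepSg b + β * shepSg (xor b c) : ℝ) : ℂ) * Complex.I))
     = ((cos α * cos β - (1 - 2 * t) * (sin α * sin β) : ℝ) : ℂ) := by
    simp only [Fintype.sum_bool, Complex.exp_mul_I, ← Complex.ofReal_cos, ← Complex.ofReal_sin]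
    simp only [shepSg]
    simp [cos_add, sin_add]
    ring
  rw [hR, ← Complex.ofReal_pow] at key
  have := congrArg Complex.re key
  rw [Complex.ofReal_re] at this
  rw [← this, Complex.re_sum]
  refine Finset.sum_congr rfl fun x _ => ?_
  rw [Complex.re_sum]
  refine Finset.sum_congr rfl fun e _ => ?_
  rw [Finset.prod_mul_distrib, Finset.prod_mul_distrib, ← Complex.exp_sum, ← Finset.sum_mul,
    ← Complex.ofReal_sum]
  have h1 : ∑ i, (α * (shepSg (x i) : ℝ) + β * shepSg (xor (x i) (e i)))
      = α * shepZ x + β * shepZ (fun i => xor (x i) (e i)) := by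
    unfold shepZ; push_cast
    rw [Finset.sum_add_distrib, Finset.mul_sum, Finset.mul_sum]
  have h2 : (∏ _i : Fin n, (1 / 2 : ℂ)) * ∏ i, (if e i then (t:ℂ) else 1 - t)
      = ((shepW n t e : ℝ) : ℂ) := by
    unfold shepW; push_cast
    congr 1
    · simp
    · refine Finset.prod_congr rfl fun i _ => ?_
      split_ifs <;> simp
  rw [h1, h2, Complex.re_ofReal_mul, Complex.exp_ofReal_mul_I_re]

noncomputable def shepH (k : ℤ) (θ : ℝ) : ℝ := (Polynomial.Chebyshev.U ℝ (k - 1)).eval (cos θ)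

lemma shepH_cont (k : ℤ) : Continuous (shepH k) :=
  (Polynomial.Chebyshev.U ℝ (k - 1)).continuous.comp continuous_cos

lemma shepH_mul_sin (k : ℤ) (θ : ℝ) : shepH k θ * sin θ = sin (k * θ) := by
  rw [shepH, Polynomial.Chebyshev.U_real_cos]; push_cast; ring_nf

lemma shepH_int_nat (j : ℕ) : ∫ θ in (0:ℝ)..π, shepH (2 * j + 1) θ = π := by
  induction j with
  | zero => simp [shepH]
  | succ j ih =>
    have h : ∀ θ, shepH (2 * ((j + 1 : ℕ) : ℤ) + 1) θ
        = 2 * cos ((2 * j + 2 : ℝ) * θ) + shepH (2 * j + 1) θ := by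
      intro θ
      have := congrArg (Polynomial.eval (cos θ))
        (Polynomial.Chebyshev.U_eq_two_mul_T_add_U ℝ (2 * j))
      simp only [Polynomial.eval_add, Polynomial.eval_mul,
        Polynomial.Chebyshev.T_real_cos] at this
      unfold shepH
      rw [show 2 * ((j + 1 : ℕ) : ℤ) + 1 - 1 = 2 * j + 2 by push_cast; ring,
        show (2 * (j:ℤ) + 1 - 1) = 2 * j by ring, this]
      simp
    simp_rw [h]
    rw [intervalIntegral.integral_add, ih, intervalIntegral.integral_const_mul,
      intervalIntegral.integral_comp_mul_left (fun x => cos x) (by positivity), integral_cos]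
    · have : sin ((2 * (j:ℝ) + 2) * π) = 0 := by
        have := sin_nat_mul_pi (2 * j + 2); push_cast at this; exact this
      simp [this]
    · exact Continuous.intervalIntegrable (by fun_prop) _ _
    · exact (shepH_cont _).intervalIntegrable _ _

lemma shepH_neg (k : ℤ) (θ : ℝ) : shepH (-k) θ = - shepH k θ := by
  rw [shepH, Polynomial.Chebyshev.U_neg_sub_one, Polynomial.eval_neg, shepH]

lemma shepH_int (k : ℤ) (hk : Odd k) :
    ∫ θ in (0:ℝ)..π, shepH k θ = π * (if 0 < k then 1 else -1) := by
  obtain ⟨j, rfl⟩ := hk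
  rcases le_or_gt 0 j with h | h
  · lift j to ℕ using h
    rw [shepH_int_nat, if_pos (by positivity), mul_one]
  · obtain ⟨l, hl⟩ : ∃ l : ℕ, j = -l - 1 := ⟨(-j - 1).toNat, by omega⟩
    rw [if_neg (by omega), show 2 * j + 1 = -(2 * (l:ℤ) + 1) by omega]
    simp_rw [shepH_neg]
    rw [intervalIntegral.integral_neg, shepH_int_nat]; ring

lemma shep_fub {ι : Type*} [Fintype ι] (c : ι → ℝ) (u v : ι → ℝ → ℝ)
    (hu : ∀ i, Continuous (u i)) (hv : ∀ i, Continuous (v i)) (a b : ℝ) :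
    ∫ x in a..b, ∫ y in a..b, ∑ i, c i * (u i x * v i y)
      = ∑ i, c i * ((∫ x in a..b, u i x) * ∫ y in a..b, v i y) := by
  have h1 : ∀ x, ∫ y in a..b, ∑ i, c i * (u i x * v i y)
      = ∑ i, c i * (u i x * ∫ y in a..b, v i y) := by
    intro x
    rw [intervalIntegral.integral_finsetSum]
    · simp_rw [intervalIntegral.integral_const_mul]
    · intro i _
      have := hv i
      exact Continuous.intervalIntegrable (by fun_prop) _ _
  simp_rw [h1]
  rw [intervalIntegral.integral_finsetSum]
  · simp_rw [intervalIntegral.integral_const_mul, intervalIntegral.integral_mul_const]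
  · intro i _
    have := hu i
    exact Continuous.intervalIntegrable (by fun_prop) _ _

lemma shep_pow_int (A B ρ : ℝ) (m : ℕ) :
    B * ∫ r in (-ρ)..ρ, (2 * (m:ℝ) + 1) * (A + r * B) ^ (2 * m)
      = (A + ρ * B) ^ (2 * m + 1) - (A - ρ * B) ^ (2 * m + 1) := by
  rw [← intervalIntegral.integral_const_mul]
  have hd : ∀ r ∈ Set.uIcc (-ρ) ρ, HasDerivAt (fun r => (A + r * B) ^ (2 * m + 1))
      (B * ((2 * (m:ℝ) + 1) * (A + r * B) ^ (2 * m))) r := by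
    intro r _
    have := (((hasDerivAt_id r).mul_const B).const_add A).pow (2 * m + 1)
    refine this.congr_deriv ?_
    simp; ring
  rw [intervalIntegral.integral_eq_sub_of_hasDerivAt hd
    (Continuous.intervalIntegrable (by fun_prop) _ _)]
  ring

noncomputable def shepStab (n : ℕ) (t : ℝ) : ℝ :=
  ∑ p : (Fin n → Bool) × (Fin n → Bool),
    shepW n t p.2 * (majSign p.1 * majSign (fun i => xor (p.1 i) (p.2 i)))

lemma shep_sens (n : ℕ) (t : ℝ) : majNoiseSens n t = 1 / 2 - 1 / 2 * shepStab n t := by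
  have h1 := shep_cos n t 0 0
  simp only [zero_mul, add_zero, cos_zero, mul_one, sin_zero, mul_zero, sub_zero, one_pow] at h1
  rw [shepStab, Fintype.sum_prod_type]
  have h0 : ∀ S : ℝ, 1 / 2 - 1 / 2 * S = 1 / 2 *
      ((∑ _x : Fin n → Bool, ∑ e : Fin n → Bool, shepW n t e) - S) := fun S => by rw [h1]; ring
  rw [h0, ← Finset.sum_sub_distrib, Finset.mul_sum, majNoiseSens]
  refine Finset.sum_congr rfl fun x _ => ?_
  rw [← Finset.sum_sub_distrib, Finset.mul_sum]
  refine Finset.sum_congr rfl fun e _ => ?_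
  simp only [shepW]
  have : (if majSign x = majSign (fun i => xor (x i) (e i)) then (0:ℝ) else 1)
      = 1 / 2 * (1 - majSign x * majSign (fun i => xor (x i) (e i))) := by
    have h : ∀ y : Fin n → Bool, majSign y = 1 ∨ majSign y = -1 := by
      intro y; unfold majSign; split_ifs <;> simp
    rcases h x with h1 | h1 <;> rcases h (fun i => xor (x i) (e i)) with h' | h' <;>
      rw [h1, h'] <;> norm_num
  rw [this]; ring

lemma shep_kernel (m : ℕ) (t α β : ℝ) (hα : sin α ≠ 0) (hβ : sin β ≠ 0) :
    ∑ p : (Fin (2 * m + 1) → Bool) × (Fin (2 * m + 1) → Bool), shepW (2 * m + 1) t p.2 *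
      (shepH (shepZ p.1) α * shepH (shepZ (fun i => xor (p.1 i) (p.2 i))) β)
    = ∫ r in (-(1 - 2 * t))..(1 - 2 * t), (2 * (m:ℝ) + 1) / 2 *
        (cos α * cos β + r * (sin α * sin β)) ^ (2 * m) := by
  have hB : sin α * sin β ≠ 0 := mul_ne_zero hα hβ
  apply mul_left_cancel₀ hB
  have h := shep_pow_int (cos α * cos β) (sin α * sin β) (1 - 2 * t) m
  have hc1 := shep_cos (2 * m + 1) t α β
  have hc2 := shep_cos (2 * m + 1) t α (-β)
  rw [cos_neg, sin_neg, show cos α * cos β - (1 - 2 * t) * (sin α * -sin β)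
    = cos α * cos β + (1 - 2 * t) * (sin α * sin β) by ring] at hc2
  rw [← hc1, ← hc2] at h
  rw [intervalIntegral.integral_const_mul] at h ⊢
  have e : sin α * sin β * ((2 * (m:ℝ) + 1) / 2 * ∫ r in (-(1 - 2 * t))..(1 - 2 * t),
      (cos α * cos β + r * (sin α * sin β)) ^ (2 * m)) = 1 / 2 * (sin α * sin β *
      ((2 * (m:ℝ) + 1) * ∫ r in (-(1 - 2 * t))..(1 - 2 * t),
      (cos α * cos β + r * (sin α * sin β)) ^ (2 * m))) := by ring
  rw [e, h, Fintype.sum_prod_type, ← Finset.sum_sub_distrib, Finset.mul_sum, Finset.mul_sum]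
  refine Finset.sum_congr rfl fun x _ => ?_
  rw [← Finset.sum_sub_distrib, Finset.mul_sum, Finset.mul_sum]
  refine Finset.sum_congr rfl fun e _ => ?_
  have s1 := shepH_mul_sin (shepZ x) α
  have s2 := shepH_mul_sin (shepZ (fun i => xor (x i) (e i))) β
  have : sin α * sin β * (shepW (2 * m + 1) t e *
      (shepH (shepZ x) α * shepH (shepZ fun i => xor (x i) (e i)) β))
      = shepW (2 * m + 1) t e * ((shepH (shepZ x) α * sin α) *
        (shepH (shepZ fun i => xor (x i) (e i)) β * sin β)) := by ring
  rw [this, s1, s2, cos_add, cos_add, neg_mul, cos_neg, sin_neg,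
    mul_comm α, mul_comm β]
  ring

lemma shep_stab (m : ℕ) (t : ℝ) :
    shepStab (2 * m + 1) t = (2 * (m:ℝ) + 1) / (2 * π ^ 2) *
      (shepK m 1 * ∫ r in (-(1 - 2 * t))..(1 - 2 * t), shepK m (1 - r ^ 2)) := by
  have hodd : Odd (2 * m + 1) := ⟨m, rfl⟩
  have h1 := shep_fub (fun p : (Fin (2 * m + 1) → Bool) × (Fin (2 * m + 1) → Bool) =>
    shepW (2 * m + 1) t p.2) (fun p => shepH (shepZ p.1))
    (fun p => shepH (shepZ (fun i => xor (p.1 i) (p.2 i))))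
    (fun _ => shepH_cont _) (fun _ => shepH_cont _) 0 π
  have h2 : ∑ p : (Fin (2 * m + 1) → Bool) × (Fin (2 * m + 1) → Bool),
      shepW (2 * m + 1) t p.2 * ((∫ x in (0:ℝ)..π, shepH (shepZ p.1) x) *
        ∫ y in (0:ℝ)..π, shepH (shepZ (fun i => xor (p.1 i) (p.2 i))) y)
      = π ^ 2 * shepStab (2 * m + 1) t := by
    rw [shepStab, Finset.mul_sum]
    refine Finset.sum_congr rfl fun p _ => ?_
    rw [shepH_int _ (shepZ_odd hodd _), shepH_int _ (shepZ_odd hodd _), ← shep_majSign,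
      ← shep_majSign]
    ring
  have sne : ∀ x ∈ Set.Ioo 0 π, sin x ≠ 0 := fun x hx => (sin_pos_of_mem_Ioo hx).ne'
  have hcongr : ∀ f g : ℝ → ℝ, (∀ x ∈ Set.Ioo 0 π, f x = g x) →
      ∫ x in (0:ℝ)..π, f x = ∫ x in (0:ℝ)..π, g x := by
    intro f g hfg
    rw [intervalIntegral.integral_of_le pi_pos.le, intervalIntegral.integral_of_le pi_pos.le,
      integral_Ioc_eq_integral_Ioo, integral_Ioc_eq_integral_Ioo]
    exact setIntegral_congr_fun measurableSet_Ioo hfg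
  rw [h2] at h1
  set ρ := 1 - 2 * t with hρ
  have h3 : π ^ 2 * shepStab (2 * m + 1) t = ∫ α in (0:ℝ)..π, ∫ β in (0:ℝ)..π,
      ∫ r in (-ρ)..ρ, (2 * (m:ℝ) + 1) / 2 *
        (cos α * cos β + r * (sin α * sin β)) ^ (2 * m) := by
    rw [← h1]
    refine hcongr _ _ fun α hα => hcongr _ _ fun β hβ => ?_
    exact shep_kernel m t α β (sne α hα) (sne β hβ)
  have h4 : ∀ α : ℝ, ∫ β in (0:ℝ)..π, ∫ r in (-ρ)..ρ, (2 * (m:ℝ) + 1) / 2 *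
        (cos α * cos β + r * (sin α * sin β)) ^ (2 * m)
      = ∫ r in (-ρ)..ρ, (2 * (m:ℝ) + 1) / 2 * shepK m 1 * (1 - (1 - r ^ 2) * sin α ^ 2) ^ m := by
    intro α
    rw [shep_swap _ (by simp only [Function.uncurry_def]; fun_prop)]
    refine intervalIntegral.integral_congr fun r _ => ?_
    have := shep_inner (cos α) (r * sin α) m
    rw [intervalIntegral.integral_const_mul]
    simp_rw [← mul_assoc]
    rw [this, show cos α ^ 2 + (r * sin α) ^ 2 = 1 - (1 - r ^ 2) * sin α ^ 2 by
      rw [cos_sq']; ring]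
    ring
  simp_rw [h4] at h3
  rw [shep_swap _ (by simp only [Function.uncurry_def]; fun_prop)] at h3
  simp_rw [intervalIntegral.integral_const_mul] at h3
  change _ = (2 * (m:ℝ) + 1) / 2 * shepK m 1 * ∫ r in (-ρ)..ρ, shepK m (1 - r ^ 2) at h3
  have hp := pi_pos.ne'
  field_simp
  linear_combination 2 * h3

/-- Sheppard's formula: for majority on `2m+1` voters with noise `t`,
`N_t(maj) → arccos(1-2t)/π`. -/
theorem stmt_9 (t : ℝ) (ht0 : 0 < t) (ht1 : t < 1 / 2) :
    Filter.Tendsto (fun m : ℕ => majNoiseSens (2 * m + 1) t)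
      Filter.atTop (nhds (Real.arccos (1 - 2 * t) / Real.pi)) := by
  have h := ((shep_limit (1 - 2 * t) (by linarith) (by linarith)).const_mul (1 / 2)).const_sub (1 / 2)
  have e : Real.arccos (1 - 2 * t) / Real.pi
      = 1 / 2 - 1 / 2 * (2 / π * arcsin (1 - 2 * t)) := by
    rw [arccos_eq_pi_div_two_sub_arcsin]
    have hp := pi_pos.ne'
    field_simp
  rw [e]
  refine h.congr fun m => ?_
  rw [shep_sens, shep_stab]
end

section
/- (KKL, part i) There exists an absolute constant C > 0 such that for every Boolean function f : {0,1}ⁿ → {0,1} with 0.1 ≤ E[f] ≤ 0.9, there exists a variable k with influence Inf_k(f) ≥ C · log n / n. -/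
open Finset Real

/-- The influence of coordinate `k` on a Boolean function: the probability
that flipping `x_k` changes the value of `f`. -/
noncomputable def influence {n : ℕ} (f : (Fin n → Bool) → Bool) (k : Fin n) : ℝ :=
  (1 / 2 ^ n : ℝ) * ∑ x : Fin n → Bool,
    (if f x = f (Function.update x k (!x k)) then 0 else 1)

/-- Sign of a bit. -/
def kklSgn (b : Bool) : ℝ := if b then -1 else 1

lemma kklSgn_sq (b : Bool) : kklSgn b ^ 2 = 1 := by cases b <;> simp [kklSgn]

lemma kklSgn_not (b : Bool) : kklSgn (!b) = - kklSgn b := by cases b <;> simp [kklSgn]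

/-- Walsh character. -/
def kklChi {n : ℕ} (S : Finset (Fin n)) (x : Fin n → Bool) : ℝ := ∏ i ∈ S, kklSgn (x i)

/-- Flip of a coordinate, as an equivalence. -/
def kklFlip {n : ℕ} (k : Fin n) : (Fin n → Bool) ≃ (Fin n → Bool) where
  toFun x := Function.update x k (!x k)
  invFun x := Function.update x k (!x k)
  left_inv x := by simp
  right_inv x := by simp

lemma kklFlip_apply {n : ℕ} (k : Fin n) (x : Fin n → Bool) :
    kklFlip k x = Function.update x k (!x k) := rfl

lemma kklFlip_flip {n : ℕ} (k : Fin n) (x : Fin n → Bool) :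
    kklFlip k (kklFlip k x) = x := by simp [kklFlip_apply]

lemma kklChi_flip_notMem {n : ℕ} (k : Fin n) (S : Finset (Fin n)) (h : k ∉ S)
    (x : Fin n → Bool) : kklChi S (kklFlip k x) = kklChi S x := by
  unfold kklChi
  refine Finset.prod_congr rfl fun i hi => ?_
  have : i ≠ k := fun e => h (e ▸ hi)
  simp [kklFlip_apply, this]

lemma kklChi_insert {n : ℕ} (k : Fin n) (S : Finset (Fin n)) (h : k ∉ S)
    (x : Fin n → Bool) : kklChi (insert k S) x = kklSgn (x k) * kklChi S x := by
  unfold kklChi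
  rw [Finset.prod_insert h]

lemma kklChi_flip_mem {n : ℕ} (k : Fin n) (S : Finset (Fin n)) (h : k ∈ S)
    (x : Fin n → Bool) : kklChi S (kklFlip k x) = - kklChi S x := by
  rw [← Finset.insert_erase h, kklChi_insert _ _ (Finset.notMem_erase k S),
    kklChi_insert _ _ (Finset.notMem_erase k S),
    kklChi_flip_notMem _ _ (Finset.notMem_erase k S)]
  simp [kklFlip_apply, kklSgn_not]

/-- Bonami's lemma, in weighted form. -/
lemma kkl_bonami {n : ℕ} (U : Finset (Fin n)) : ∀ a : Finset (Fin n) → ℝ,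
    ∑ x : Fin n → Bool, (∑ S ∈ U.powerset, a S * kklChi S x) ^ 4
      ≤ 2 ^ n * (∑ S ∈ U.powerset, 3 ^ S.card * a S ^ 2) ^ 2 := by
  induction U using Finset.induction_on with
  | empty =>
    intro a
    simp [kklChi]
    apply le_of_eq; ring
  | insert i U hi ih =>
    intro a
    set A : (Fin n → Bool) → ℝ := fun x => ∑ S ∈ U.powerset, a S * kklChi S x with hA
    set B : (Fin n → Bool) → ℝ := fun x => ∑ S ∈ U.powerset, a (insert i S) * kklChi S x with hB
    have hnot : ∀ S ∈ U.powerset, i ∉ S := fun S hS h => hi (Finset.mem_powerset.1 hS h)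
    have hsplit : ∀ x, ∑ S ∈ (insert i U).powerset, a S * kklChi S x
        = A x + kklSgn (x i) * B x := by
      intro x
      rw [Finset.sum_powerset_insert hi, hA, hB]
      simp only [Finset.mul_sum]
      congr 1
      refine Finset.sum_congr rfl fun S hS => ?_
      rw [kklChi_insert _ _ (hnot S hS)]; ring
    have hAf : ∀ x, A (kklFlip i x) = A x := fun x =>
      Finset.sum_congr rfl fun S hS => by rw [kklChi_flip_notMem _ _ (hnot S hS)]
    have hBf : ∀ x, B (kklFlip i x) = B x := fun x =>
      Finset.sum_congr rfl fun S hS => by rw [kklChi_flip_notMem _ _ (hnot S hS)]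
    set α := ∑ S ∈ U.powerset, (3:ℝ) ^ S.card * a S ^ 2 with hα
    set β := ∑ S ∈ U.powerset, (3:ℝ) ^ S.card * a (insert i S) ^ 2 with hβ
    have hw : ∑ S ∈ (insert i U).powerset, (3:ℝ) ^ S.card * a S ^ 2 = α + 3 * β := by
      rw [Finset.sum_powerset_insert hi, hβ, Finset.mul_sum]
      congr 1
      refine Finset.sum_congr rfl fun S hS => ?_
      rw [Finset.card_insert_of_notMem (hnot S hS)]; ring
    have hα0 : 0 ≤ α := Finset.sum_nonneg fun S _ => by positivity
    have hβ0 : 0 ≤ β := Finset.sum_nonneg fun S _ => by positivity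
    have h1 : ∑ x, A x ^ 4 ≤ 2 ^ n * α ^ 2 := ih a
    have h2 : ∑ x, B x ^ 4 ≤ 2 ^ n * β ^ 2 := ih (fun S => a (insert i S))
    have h3 : ∑ x, A x ^ 2 * B x ^ 2 ≤ 2 ^ n * α * β := by
      have cs := Finset.sum_mul_sq_le_sq_mul_sq Finset.univ (fun x => A x ^ 2) (fun x => B x ^ 2)
      simp only [← pow_mul] at cs
      norm_num at cs
      refine abs_le_of_sq_le_sq' ?_ (by positivity) |>.2
      calc _ ≤ _ := cs
        _ ≤ (2 ^ n * α ^ 2) * (2 ^ n * β ^ 2) :=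
          mul_le_mul h1 h2 (Finset.sum_nonneg fun S _ => by positivity) (by positivity)
        _ = _ := by ring
    have hsym : ∑ x, (A x + kklSgn (x i) * B x) ^ 4 = ∑ x, (A x - kklSgn (x i) * B x) ^ 4 := by
      rw [← Equiv.sum_comp (kklFlip i)]
      refine Finset.sum_congr rfl fun x _ => ?_
      rw [hAf, hBf]
      simp [kklFlip_apply, kklSgn_not]; ring
    have hsum : ∑ x, (A x + kklSgn (x i) * B x) ^ 4
        = ∑ x, A x ^ 4 + 6 * ∑ x, A x ^ 2 * B x ^ 2 + ∑ x, B x ^ 4 := by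
      have : ∑ x, (A x + kklSgn (x i) * B x) ^ 4 + ∑ x, (A x - kklSgn (x i) * B x) ^ 4
          = 2 * (∑ x, A x ^ 4 + 6 * ∑ x, A x ^ 2 * B x ^ 2 + ∑ x, B x ^ 4) := by
        rw [Finset.mul_sum, ← Finset.sum_add_distrib, ← Finset.sum_add_distrib,
          ← Finset.sum_add_distrib, Finset.mul_sum]
        refine Finset.sum_congr rfl fun x _ => ?_
        have := kklSgn_sq (x i)
        linear_combination (12 * A x ^ 2 * B x ^ 2 + 2 * B x ^ 4 * (kklSgn (x i) ^ 2 + 1)) * this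
      linarith
    simp only [hsplit]
    rw [hsum, hw]
    have : (0:ℝ) < 2 ^ n := by positivity
    have hb : (0:ℝ) ≤ 2 ^ n * β ^ 2 := by positivity
    nlinarith

/-- Fourier coefficient. -/
noncomputable def kklHat {n : ℕ} (g : (Fin n → Bool) → ℝ) (S : Finset (Fin n)) : ℝ :=
  (1 / 2 ^ n : ℝ) * ∑ x, g x * kklChi S x

lemma kkl_orth {n : ℕ} (x y : Fin n → Bool) :
    ∑ S : Finset (Fin n), kklChi S x * kklChi S y = if x = y then 2 ^ n else 0 := by
  have h := Finset.prod_one_add (f := fun i => kklSgn (x i) * kklSgn (y i))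
    (Finset.univ : Finset (Fin n))
  rw [Finset.powerset_univ] at h
  simp only [kklChi, ← Finset.prod_mul_distrib]
  rw [← h]
  split_ifs with hxy
  · subst hxy
    simp only [← pow_two, kklSgn_sq]
    norm_num
  · obtain ⟨i, hi⟩ := Function.ne_iff.1 hxy
    apply Finset.prod_eq_zero (Finset.mem_univ i)
    revert hi
    cases x i <;> cases y i <;> simp [kklSgn]

lemma kkl_parseval {n : ℕ} (g : (Fin n → Bool) → ℝ) :
    ∑ S, kklHat g S ^ 2 = (1 / 2 ^ n : ℝ) * ∑ x, g x ^ 2 := by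
  have h1 : ∀ S, kklHat g S ^ 2
      = (1 / 2 ^ n : ℝ) ^ 2 * ∑ x, ∑ y, g x * g y * (kklChi S x * kklChi S y) := by
    intro S
    rw [kklHat, mul_pow, pow_two (∑ x, _), Finset.sum_mul_sum]
    congr 1
    refine Finset.sum_congr rfl fun x _ => Finset.sum_congr rfl fun y _ => by ring
  simp only [h1]
  rw [← Finset.mul_sum, Finset.sum_comm]
  have h2 : ∀ x, ∑ S, ∑ y, g x * g y * (kklChi S x * kklChi S y) = 2 ^ n * g x ^ 2 := by
    intro x
    rw [Finset.sum_comm]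
    simp only [← Finset.mul_sum, kkl_orth]
    simp; ring
  simp only [h2]
  rw [← Finset.mul_sum]
  field_simp

/-- Hypercontractive bound for functions with values in {-1,0,1}. -/
lemma kkl_hyper {n : ℕ} (g : (Fin n → Bool) → ℝ) (hg : ∀ x, g x ^ 4 = g x ^ 2) :
    (∑ S, (1 / 3 : ℝ) ^ S.card * kklHat g S ^ 2) ^ 2 ≤ ((1 / 2 ^ n : ℝ) * ∑ x, g x ^ 2) ^ 3 := by
  set W := ∑ S, (1 / 3 : ℝ) ^ S.card * kklHat g S ^ 2 with hW
  set P := (1 / 2 ^ n : ℝ) * ∑ x, g x ^ 2 with hP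
  have hW0 : 0 ≤ W := Finset.sum_nonneg fun S _ => by positivity
  have hP0 : 0 ≤ P := mul_nonneg (by positivity) (Finset.sum_nonneg fun S _ => by positivity)
  set h : (Fin n → Bool) → ℝ := fun x => ∑ S, ((1 / 3 : ℝ) ^ S.card * kklHat g S) * kklChi S x with hh
  have hN : (0:ℝ) < 2 ^ n := by positivity
  have e1 : ∑ x, g x * h x = 2 ^ n * W := by
    simp only [hh, hW, Finset.mul_sum]
    rw [Finset.sum_comm]
    refine Finset.sum_congr rfl fun S _ => ?_
    have : ∑ x, g x * kklChi S x = 2 ^ n * kklHat g S := by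
      rw [kklHat]; field_simp
    have e : ∀ x, g x * ((1 / 3 : ℝ) ^ S.card * kklHat g S * kklChi S x)
      = ((1 / 3 : ℝ) ^ S.card * kklHat g S) * (g x * kklChi S x) := fun x => by ring
    simp only [e]
    rw [← Finset.mul_sum, this]; ring
  have e2 : ∑ x, h x ^ 4 ≤ 2 ^ n * W ^ 2 := by
    have := kkl_bonami (Finset.univ : Finset (Fin n)) (fun S => (1 / 3 : ℝ) ^ S.card * kklHat g S)
    rw [Finset.powerset_univ] at this
    refine this.trans (le_of_eq ?_)
    congr 2
    refine Finset.sum_congr rfl fun S _ => ?_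
    have : (3:ℝ) ^ S.card * (1 / 3) ^ S.card = 1 := by rw [← mul_pow]; norm_num
    linear_combination ((1 / 3 : ℝ) ^ S.card * kklHat g S ^ 2) * this
  have e3 : ∑ x, g x ^ 2 = 2 ^ n * P := by rw [hP]; field_simp
  -- first Cauchy-Schwarz
  have c1 : (∑ x, g x * h x) ^ 2 ≤ (∑ x, g x ^ 2) * ∑ x, g x ^ 2 * h x ^ 2 := by
    have := Finset.sum_mul_sq_le_sq_mul_sq Finset.univ (fun x => g x ^ 2) (fun x => g x * h x)
    have r1 : ∀ x, g x ^ 2 * (g x * h x) = g x * h x := by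
      intro x
      have : g x * g x * (g x ^ 2 - 1) = 0 := by linear_combination hg x
      rcases mul_eq_zero.1 this with h' | h'
      · have : g x = 0 := by simpa using h'
        simp [this]
      · linear_combination (g x * h x) * h'
    have r2 : ∀ x, (g x ^ 2) ^ 2 = g x ^ 2 := fun x => by linear_combination hg x
    simpa only [r1, r2, mul_pow] using this
  have c2 : (∑ x, g x ^ 2 * h x ^ 2) ^ 2 ≤ (∑ x, g x ^ 2) * ∑ x, h x ^ 4 := by
    have := Finset.sum_mul_sq_le_sq_mul_sq Finset.univ (fun x => g x ^ 2) (fun x => h x ^ 2)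
    have r2 : ∀ x, (g x ^ 2) ^ 2 = g x ^ 2 := fun x => by linear_combination hg x
    simpa only [r2, ← pow_mul] using this
  set Q := ∑ x, g x ^ 2 * h x ^ 2
  have hQ0 : 0 ≤ Q := Finset.sum_nonneg fun S _ => by positivity
  rw [e1, e3] at c1
  rw [e3] at c2
  have c2' : Q ^ 2 ≤ (2 ^ n) ^ 2 * (P * W ^ 2) := by
    refine c2.trans ?_
    have := mul_le_mul_of_nonneg_left e2 (by positivity : 0 ≤ 2 ^ n * P)
    linarith
  have c3 : (2 ^ n * W ^ 2) ≤ P * Q := by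
    have : (2:ℝ) ^ n * (2 ^ n * W ^ 2) ≤ 2 ^ n * (P * Q) := by linarith
    exact le_of_mul_le_mul_left this hN
  have c4 : (2 ^ n * W ^ 2) ^ 2 ≤ P ^ 2 * ((2 ^ n) ^ 2 * (P * W ^ 2)) := by
    calc _ ≤ (P * Q) ^ 2 := by gcongr
      _ = P ^ 2 * Q ^ 2 := by ring
      _ ≤ _ := by gcongr
  rcases hW0.eq_or_lt with h0 | h0
  · rw [← h0, zero_pow two_ne_zero]; positivity
  · have : ((2 ^ n) ^ 2 * W ^ 2) * W ^ 2 ≤ ((2 ^ n) ^ 2 * W ^ 2) * P ^ 3 := by linarith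
    exact le_of_mul_le_mul_left this (by positivity)

lemma kkl_hat_diff {n : ℕ} (F : (Fin n → Bool) → ℝ) (k : Fin n) (S : Finset (Fin n)) (hk : k ∈ S) :
    kklHat (fun x => F x - F (kklFlip k x)) S = 2 * kklHat F S := by
  have : ∑ x, F (kklFlip k x) * kklChi S x = - ∑ x, F x * kklChi S x := by
    rw [← Equiv.sum_comp (kklFlip k), ← Finset.sum_neg_distrib]
    refine Finset.sum_congr rfl fun x _ => ?_
    rw [kklFlip_flip, kklChi_flip_mem _ _ hk]; ring
  simp only [kklHat, sub_mul, Finset.sum_sub_distrib, this]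
  ring

/-- Double counting. -/
lemma kkl_count {n : ℕ} (w : Finset (Fin n) → ℝ) :
    ∑ S, (S.card : ℝ) * w S = ∑ k : Fin n, ∑ S, if k ∈ S then w S else 0 := by
  rw [Finset.sum_comm]
  refine Finset.sum_congr rfl fun S _ => ?_
  simp

lemma kkl_pointwise (L : ℝ) (hL : 0 < L) (m : ℕ) (hm : 1 ≤ m) :
    1 ≤ (m : ℝ) * (8 / L) + Real.exp (L / 4) * (m * (1 / 3) ^ m) := by
  have hm' : (1:ℝ) ≤ m := by exact_mod_cast hm
  by_cases h : L / 8 ≤ m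
  · have : 1 ≤ (m : ℝ) * (8 / L) := by
      rw [← mul_div_assoc, le_div_iff₀ hL]; linarith
    have : 0 ≤ Real.exp (L / 4) * (m * (1 / 3) ^ m) := by positivity
    linarith
  · push Not at h
    have h3 : (3:ℝ) ^ m ≤ Real.exp (L / 4) := by
      calc (3:ℝ) ^ m ≤ (Real.exp 2) ^ m := by
            gcongr
            have := Real.add_one_le_exp (2:ℝ); linarith
        _ = Real.exp (m * 2) := by rw [Real.exp_nat_mul]
        _ ≤ _ := by apply Real.exp_le_exp.2; linarith
    have e : (3:ℝ) ^ m * (1 / 3) ^ m = 1 := by rw [← mul_pow]; norm_num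
    have : 1 ≤ Real.exp (L / 4) * (m * (1 / 3) ^ m) := by
      calc (1:ℝ) = 3 ^ m * (1 * (1 / 3) ^ m) := by rw [one_mul, e]
        _ ≤ _ := by gcongr
    have : 0 ≤ (m : ℝ) * (8 / L) := by positivity
    linarith

/-- Kahn–Kalai–Linial: there is an absolute constant `C > 0` such that every
Boolean function with `0.1 ≤ E[f] ≤ 0.9` has a variable with influence at
least `C log n / n`. -/
theorem stmt_15 :
    ∃ C : ℝ, 0 < C ∧
      ∀ n : ℕ, 1 ≤ n → ∀ f : (Fin n → Bool) → Bool,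
        0.1 ≤ (1 / 2 ^ n : ℝ) * ∑ x : Fin n → Bool, (if f x then 1 else 0) →
        (1 / 2 ^ n : ℝ) * ∑ x : Fin n → Bool, (if f x then 1 else 0) ≤ 0.9 →
        ∃ k : Fin n, C * Real.log n / n ≤ influence f k := by
  refine ⟨1 / 100, by norm_num, ?_⟩
  intro n hn f hlo hhi
  by_contra hcon
  push Not at hcon
  set L := Real.log n with hLdef
  have hn0 : (0:ℝ) < n := by exact_mod_cast hn
  set F : (Fin n → Bool) → ℝ := fun x => if f x then 1 else 0 with hF
  set p := (1 / 2 ^ n : ℝ) * ∑ x, F x with hp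
  set G : Fin n → (Fin n → Bool) → ℝ := fun k x => F x - F (kklFlip k x) with hG
  have hG4 : ∀ k x, G k x ^ 4 = G k x ^ 2 := by
    intro k x
    simp only [hG, hF]
    cases f x <;> cases f (kklFlip k x) <;> norm_num
  have hinf : ∀ k, influence f k = (1 / 2 ^ n : ℝ) * ∑ x, G k x ^ 2 := by
    intro k
    unfold influence
    congr 1
    refine Finset.sum_congr rfl fun x _ => ?_
    simp only [hG, hF, kklFlip_apply]
    cases f x <;> cases f (Function.update x k (!x k)) <;> norm_num
  have hinf0 : ∀ k, 0 ≤ influence f k := fun k => by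
    rw [hinf]; exact mul_nonneg (by positivity) (Finset.sum_nonneg fun S _ => by positivity)
  have hL : 0 < L := by
    have h1 := (hinf0 ⟨0, hn⟩).trans_lt (hcon ⟨0, hn⟩)
    by_contra hle
    push Not at hle
    have : 1 / 100 * L / n ≤ 0 := div_nonpos_of_nonpos_of_nonneg (by linarith) hn0.le
    linarith
  have hexp : Real.exp L = n := Real.exp_log hn0
  set δ := 1 / 100 * L / n with hδ
  have hδ0 : 0 < δ := by positivity
  set c := kklHat F with hc
  -- low-level bounds
  have b1 : ∀ k, (∑ S, if k ∈ S then 4 * c S ^ 2 else 0) ≤ δ := by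
    intro k
    refine le_trans ?_ (hcon k).le
    rw [hinf, ← kkl_parseval]
    refine Finset.sum_le_sum fun S _ => ?_
    split_ifs with h
    · rw [hG, kkl_hat_diff F k S h, hc]; apply le_of_eq; ring
    · positivity
  have b2 : ∀ k, (∑ S, if k ∈ S then 4 * ((1 / 3 : ℝ) ^ S.card * c S ^ 2) else 0)
      ≤ 0.02 * (Real.exp (- (L / 4)) / n) := by
    intro k
    have hW : (∑ S, if k ∈ S then 4 * ((1 / 3 : ℝ) ^ S.card * c S ^ 2) else 0)
        ≤ ∑ S, (1 / 3 : ℝ) ^ S.card * kklHat (G k) S ^ 2 := by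
      refine Finset.sum_le_sum fun S _ => ?_
      split_ifs with h
      · rw [hG, kkl_hat_diff F k S h, hc]; apply le_of_eq; ring
      · positivity
    refine hW.trans ?_
    refine (pow_le_pow_iff_left₀ (Finset.sum_nonneg fun S _ => by positivity) (by positivity) two_ne_zero).1 ?_
    refine (kkl_hyper (G k) (hG4 k)).trans ?_
    rw [← hinf]
    have h3 : influence f k ^ 3 ≤ δ ^ 3 := pow_le_pow_left₀ (hinf0 k) (hcon k).le 3
    refine h3.trans ?_
    have hl : L / 6 ≤ Real.exp (L / 6) := by linarith [Real.add_one_le_exp (L / 6)]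
    have hl3 : (L / 6) ^ 3 ≤ Real.exp (L / 2) := by
      calc (L / 6) ^ 3 ≤ Real.exp (L / 6) ^ 3 := by gcongr
        _ = _ := by rw [← Real.exp_nat_mul]; congr 1; push_cast; ring
    have hE : Real.exp (-(L / 4)) ^ 2 * n = Real.exp (L / 2) := by
      rw [← hexp, ← Real.exp_nat_mul, ← Real.exp_add]; congr 1; push_cast; ring
    have : δ ^ 3 = (1 / 100) ^ 3 * 216 * (L / 6) ^ 3 / n ^ 3 := by rw [hδ]; field_simp; norm_num
    rw [this]
    have : (0.02 * (Real.exp (-(L / 4)) / n)) ^ 2 = 0.02 ^ 2 * Real.exp (L / 2) / (n:ℝ) ^ 3 := by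
      rw [← hE]; field_simp
    rw [this]
    gcongr ?_ / _
    nlinarith [Real.exp_pos (L / 2)]
  -- sums over k
  have s1 : ∑ S, (S.card : ℝ) * (4 * c S ^ 2) ≤ 1 / 100 * L := by
    rw [kkl_count]
    refine (Finset.sum_le_sum fun k _ => b1 k).trans ?_
    simp [hδ]; apply le_of_eq; field_simp
  have s2 : ∑ S, (S.card : ℝ) * (4 * ((1 / 3 : ℝ) ^ S.card * c S ^ 2))
      ≤ 0.02 * Real.exp (-(L / 4)) := by
    rw [kkl_count]
    refine (Finset.sum_le_sum fun k _ => b2 k).trans ?_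
    rw [Finset.sum_const, Finset.card_univ, Fintype.card_fin, nsmul_eq_mul]
    apply le_of_eq; field_simp
  -- variance
  have hc0 : c ∅ = p := by simp [hc, kklHat, kklChi, hp]
  have hpar : ∑ S, c S ^ 2 = p := by
    rw [hc, kkl_parseval, hp]
    congr 1
    refine Finset.sum_congr rfl fun x _ => ?_
    simp only [hF]; split_ifs <;> norm_num
  have hpt : ∀ S, 4 * c S ^ 2 ≤ (if S = ∅ then 4 * c S ^ 2 else 0)
      + (8 / L * ((S.card : ℝ) * (4 * c S ^ 2))
      + Real.exp (L / 4) * ((S.card : ℝ) * (4 * ((1 / 3 : ℝ) ^ S.card * c S ^ 2)))) := by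
    intro S
    split_ifs with h
    · subst h; simp
    · have := kkl_pointwise L hL S.card (Finset.card_pos.2 (Finset.nonempty_iff_ne_empty.2 h))
      have := mul_le_mul_of_nonneg_left this (by positivity : 0 ≤ 4 * c S ^ 2)
      linarith
  have hsum := Finset.sum_le_sum fun S (_ : S ∈ Finset.univ) => hpt S
  rw [Finset.sum_add_distrib, Finset.sum_add_distrib, ← Finset.mul_sum, ← Finset.mul_sum,
    ← Finset.mul_sum, hpar, Finset.sum_ite_eq' , if_pos (Finset.mem_univ _), hc0] at hsum
  have t1 := mul_le_mul_of_nonneg_left s1 (by positivity : 0 ≤ 8 / L)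
  have t2 := mul_le_mul_of_nonneg_left s2 (Real.exp_pos (L / 4)).le
  have t1' : 8 / L * (1 / 100 * L) = 0.08 := by field_simp; norm_num
  have t2' : Real.exp (L / 4) * (0.02 * Real.exp (-(L / 4))) = 0.02 := by
    rw [mul_left_comm, ← Real.exp_add]; simp
  rw [t1'] at t1
  rw [t2'] at t2
  norm_num at hlo hhi t1 t2
  nlinarith
end
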